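/- Let q ≥ 1 be an integer, let 0 < α₁ ≤ α₂ ≤ ⋯ ≤ α_q be real numbers, and let ε > 0. Then the integral over {(w,h) ∈ ℝ² : w > 0, h > 0, w·h ≤ 1} of the function w²·[ Σ_{i=1}^{q-1} i·𝟙{α_i² w ≤ ε² h ≤ α_{i+1}² w} + q·𝟙{α_q² w ≤ ε² h} ] with respect to two-dimensional Lebesgue measure equals (ε²/4)·Σ_{j=1}^{q} 1/α_j². -/

import Mathlib

/-!
On `w > 0`, write `b_j` for the indicator of the sector `α_j² w ≤ ε² h`. Away from the null lines
`ε² h = α_j² w`, the `i`-th band indicator is `b_i - b_{i+1}`, because `α` is monotone; Abel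
summation (`sum_mul_sub_succ`) then turns the weight into `∑ j, b_j`. By Fubini, the integral of
`w²` over a single sector intersected with `{w h ≤ 1}` is
`∫₀^r w² (1/w - w/r²) dw = r²/4` with `r = ε / α_j` (`integral_sector`).
-/

open MeasureTheory

/-- The part of the open quadrant with `w h ≤ 1` lying above the line `w = r² h`. -/
def sector (r : ℝ) : Set (ℝ × ℝ) := {p | 0 < p.1 ∧ p.1 ≤ r ^ 2 * p.2 ∧ p.1 * p.2 ≤ 1}

lemma measurableSet_sector (r : ℝ) : MeasurableSet (sector r) :=
  (measurableSet_lt measurable_const measurable_fst).inter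
    ((measurableSet_le measurable_fst (measurable_snd.const_mul _)).inter
      (measurableSet_le (measurable_fst.mul measurable_snd) measurable_const))

lemma sector_section {r : ℝ} (hr : 0 < r) (w h : ℝ) :
    (sector r).indicator (fun p => p.1 ^ 2) (w, h) =
      (Set.Ioc 0 r).indicator
        (fun w => (Set.Icc (w / r ^ 2) (1 / w)).indicator (fun _ => w ^ 2) h) w := by
  have hr2 : 0 < r ^ 2 := by positivity
  have key : (w, h) ∈ sector r ↔ w ∈ Set.Ioc 0 r ∧ h ∈ Set.Icc (w / r ^ 2) (1 / w) := by
    simp only [sector, Set.mem_ofPred_eq, Set.mem_Ioc, Set.mem_Icc]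
    constructor
    · rintro ⟨hw, h1, h2⟩
      refine ⟨⟨hw, ?_⟩, ?_, ?_⟩
      · -- `w² ≤ r² (w h) ≤ r²`
        refine (pow_le_pow_iff_left₀ hw.le hr.le two_ne_zero).1 ?_
        nlinarith [mul_le_mul_of_nonneg_left h1 hw.le, mul_le_mul_of_nonneg_left h2 hr2.le]
      · rw [div_le_iff₀ hr2]; linarith
      · rw [le_div_iff₀ hw]; linarith
    · rintro ⟨⟨hw, -⟩, h1, h2⟩
      rw [div_le_iff₀ hr2] at h1
      rw [le_div_iff₀ hw] at h2
      exact ⟨hw, by linarith, by linarith⟩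
  classical
  simp only [Set.indicator_apply, key]
  split_ifs <;> first | rfl | tauto

lemma integral_sector_section {r : ℝ} (hr : 0 < r) (w : ℝ) :
    ∫ h, (sector r).indicator (fun p => p.1 ^ 2) (w, h) =
      (Set.Ioc 0 r).indicator (fun w => w - w ^ 3 / r ^ 2) w := by
  simp_rw [sector_section hr]
  by_cases hw : w ∈ Set.Ioc 0 r
  · simp only [Set.indicator_of_mem hw]
    have hw0 : 0 < w := hw.1
    rw [integral_indicator_const _ measurableSet_Icc, Real.volume_real_Icc_of_le]
    · simp only [smul_eq_mul]
      field_simp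
    · rw [div_le_div_iff₀ (by positivity) hw0]
      nlinarith [hw.2]
  · simp [Set.indicator_of_notMem hw]

lemma integrable_sector {r : ℝ} (hr : 0 < r) :
    Integrable ((sector r).indicator fun p => p.1 ^ 2) := by
  have hm : Measurable ((sector r).indicator fun p : ℝ × ℝ => p.1 ^ 2) :=
    (measurable_fst.pow_const 2).indicator (measurableSet_sector r)
  rw [Measure.volume_eq_prod, integrable_prod_iff hm.aestronglyMeasurable]
  constructor
  · refine .of_forall fun w => ?_
    simp_rw [sector_section hr]
    by_cases hw : w ∈ Set.Ioc 0 r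
    · simp only [Set.indicator_of_mem hw]
      exact (integrable_indicator_iff measurableSet_Icc).2 continuousOn_const.integrableOn_Icc
    · simp [Set.indicator_of_notMem hw]
  · have hn : ∀ p, ‖(sector r).indicator (fun p : ℝ × ℝ => p.1 ^ 2) p‖ =
        (sector r).indicator (fun p => p.1 ^ 2) p := fun p =>
      Real.norm_of_nonneg (Set.indicator_nonneg (fun _ _ => sq_nonneg _) _)
    simp_rw [hn, integral_sector_section hr]
    refine (integrable_indicator_iff measurableSet_Ioc).2 ?_
    exact (ContinuousOn.integrableOn_Icc (by fun_prop)).mono_set Set.Ioc_subset_Icc_self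

lemma integral_sector {r : ℝ} (hr : 0 < r) :
    ∫ p, (sector r).indicator (fun p => p.1 ^ 2) p = r ^ 2 / 4 := by
  have hi := integrable_sector hr
  rw [Measure.volume_eq_prod] at hi ⊢
  rw [integral_prod _ hi]
  simp_rw [integral_sector_section hr]
  rw [integral_indicator measurableSet_Ioc, ← intervalIntegral.integral_of_le hr.le,
    intervalIntegral.integral_sub (by simp)
      (Continuous.intervalIntegrable (by fun_prop) _ _), intervalIntegral.integral_div,
    integral_id, integral_pow]
  field_simp
  ring

/-- Abel summation of `∑ i (b_i - b_{i+1})`. -/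
lemma sum_mul_sub_succ (b : ℕ → ℝ) (n : ℕ) :
    ∑ i ∈ Finset.Icc 1 n, (i : ℝ) * (b i - b (i + 1)) + ((n + 1 : ℕ) : ℝ) * b (n + 1) =
      ∑ j ∈ Finset.Icc 1 (n + 1), b j := by
  induction n with
  | zero => simp
  | succ n ih =>
    rw [Finset.sum_Icc_succ_top (by lia), Finset.sum_Icc_succ_top (by lia : 1 ≤ n + 1 + 1), ← ih]
    push_cast
    ring

lemma ae_off_line (c d : ℝ) (hd : d ≠ 0) : ∀ᵐ p : ℝ × ℝ, d * p.2 ≠ c * p.1 := by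
  rw [Measure.volume_eq_prod, ae_iff]
  simp only [ne_eq, not_not]
  rw [Measure.measure_prod_null (measurableSet_eq_fun (by fun_prop) (by fun_prop))]
  refine .of_forall fun w => ?_
  have : Prod.mk w ⁻¹' {p : ℝ × ℝ | d * p.2 = c * p.1} = {c * w / d} := by
    ext h
    simp [eq_div_iff hd, mul_comm]
  simp [this]

/-- The two-variable core of Lemma 4.2 of the paper (cylinder case): integrating `w²`
against the cylinder-counting weight over the area-one cone `{wh ≤ 1}` yields
`(ε²/4)·Σ_j 1/α_j²`. -/
theorem integral_cyl_weight_wh (q : ℕ) (hq : 1 ≤ q) (α : ℕ → ℝ)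
    (hα0 : ∀ j ∈ Finset.Icc 1 q, 0 < α j)
    (hmono : ∀ i, 1 ≤ i → i < q → α i ≤ α (i + 1))
    (ε : ℝ) (hε : 0 < ε) :
    ∫ p in {p : ℝ × ℝ | 0 < p.1 ∧ 0 < p.2 ∧ p.1 * p.2 ≤ 1},
        p.1 ^ 2 *
          ((∑ i ∈ Finset.Icc 1 (q - 1), (i : ℝ) *
              Set.indicator {x : ℝ × ℝ |
                  α i ^ 2 * x.1 ≤ ε ^ 2 * x.2 ∧ ε ^ 2 * x.2 ≤ α (i + 1) ^ 2 * x.1}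
                (fun _ => (1 : ℝ)) p)
            + (q : ℝ) *
              Set.indicator {x : ℝ × ℝ | α q ^ 2 * x.1 ≤ ε ^ 2 * x.2}
                (fun _ => (1 : ℝ)) p)
      = ε ^ 2 / 4 * ∑ j ∈ Finset.Icc 1 q, 1 / α j ^ 2 := by
  have hεα : ∀ j ∈ Finset.Icc 1 q, 0 < ε / α j := fun j hj => div_pos hε (hα0 j hj)
  have hmeas : MeasurableSet {p : ℝ × ℝ | 0 < p.1 ∧ 0 < p.2 ∧ p.1 * p.2 ≤ 1} :=
    (measurableSet_lt measurable_const measurable_fst).inter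
      ((measurableSet_lt measurable_const measurable_snd).inter
        (measurableSet_le (measurable_fst.mul measurable_snd) measurable_const))
  have hoff : ∀ᵐ p : ℝ × ℝ, ∀ j, ε ^ 2 * p.2 ≠ α j ^ 2 * p.1 :=
    ae_all_iff.2 fun j => ae_off_line _ _ (by positivity)
  rw [← integral_indicator hmeas]
  trans ∫ p, ∑ j ∈ Finset.Icc 1 q, (sector (ε / α j)).indicator (fun p => p.1 ^ 2) p
  · refine integral_congr_ae ?_
    filter_upwards [hoff] with p hp
    -- membership in the `j`-th sector, in the form used by the weight
    have hsec : ∀ j ∈ Finset.Icc 1 q, p ∈ sector (ε / α j) ↔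
        (0 < p.1 ∧ 0 < p.2 ∧ p.1 * p.2 ≤ 1) ∧ α j ^ 2 * p.1 ≤ ε ^ 2 * p.2 := by
      intro j hj
      have ha := hα0 j hj
      have hiff : p.1 ≤ (ε / α j) ^ 2 * p.2 ↔ α j ^ 2 * p.1 ≤ ε ^ 2 * p.2 := by
        rw [div_pow, div_mul_eq_mul_div, le_div_iff₀ (by positivity), mul_comm p.1]
      simp only [sector, Set.mem_ofPred_eq, hiff]
      constructor
      · rintro ⟨h1, h2, h3⟩
        exact ⟨⟨h1, pos_of_mul_pos_right ((by positivity : 0 < α j ^ 2 * p.1).trans_le h2)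
          (by positivity), h3⟩, h2⟩
      · rintro ⟨⟨h1, -, h3⟩, h2⟩
        exact ⟨h1, h2, h3⟩
    by_cases hS : 0 < p.1 ∧ 0 < p.2 ∧ p.1 * p.2 ≤ 1
    · rw [Set.indicator_of_mem (by exact hS)]
      obtain ⟨n, rfl⟩ : ∃ n, q = n + 1 := ⟨q - 1, by lia⟩
      rw [Nat.add_sub_cancel]
      have hband : ∀ i ∈ Finset.Icc 1 n, (i : ℝ) * Set.indicator {x : ℝ × ℝ |
            α i ^ 2 * x.1 ≤ ε ^ 2 * x.2 ∧ ε ^ 2 * x.2 ≤ α (i + 1) ^ 2 * x.1}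
            (fun _ => (1 : ℝ)) p =
          (i : ℝ) * ((if α i ^ 2 * p.1 ≤ ε ^ 2 * p.2 then 1 else 0) -
            (if α (i + 1) ^ 2 * p.1 ≤ ε ^ 2 * p.2 then 1 else 0)) := by
        intro i hi
        rw [Finset.mem_Icc] at hi
        have ha := hα0 i (by rw [Finset.mem_Icc]; lia)
        have hle : α i ^ 2 * p.1 ≤ α (i + 1) ^ 2 * p.1 :=
          mul_le_mul_of_nonneg_right
            (pow_le_pow_left₀ ha.le (hmono i hi.1 (by lia)) 2) hS.1.le
        have hne := hp (i + 1)
        congr 1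
        simp only [Set.indicator_apply, Set.mem_ofPred_eq]
        rcases lt_or_gt_of_ne hne with hlt | hgt
        · simp [hlt.le, not_le.2 hlt]
        · simp [hgt.le, not_le.2 hgt, hle.trans hgt.le]
      have hlast : Set.indicator {x : ℝ × ℝ | α (n + 1) ^ 2 * x.1 ≤ ε ^ 2 * x.2}
          (fun _ => (1 : ℝ)) p = if α (n + 1) ^ 2 * p.1 ≤ ε ^ 2 * p.2 then 1 else 0 := by
        simp [Set.indicator_apply]
      rw [Finset.sum_congr rfl hband, hlast,
        sum_mul_sub_succ (fun j => if α j ^ 2 * p.1 ≤ ε ^ 2 * p.2 then 1 else 0), Finset.mul_sum]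
      refine Finset.sum_congr rfl fun j hj => ?_
      classical
      simp [Set.indicator_apply, hsec j hj, hS]
    · rw [Set.indicator_of_notMem (by exact hS)]
      refine (Finset.sum_eq_zero fun j hj => ?_).symm
      exact Set.indicator_of_notMem (fun h => hS ((hsec j hj).1 h).1) _
  · rw [integral_finsetSum _ fun j hj => integrable_sector (hεα j hj), Finset.mul_sum]
    refine Finset.sum_congr rfl fun j hj => ?_
    rw [integral_sector (hεα j hj)]
    ring
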